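/- For any vertex v of a directed median graph (G,o), the poset (F_o(v,G), ⪯_o) is order-isomorphic to the domain (D(E), ⊆) of some event structure E. -/

import Mathlib

/-- An event structure `(E, ≤, #)`. -/
structure EventStructure where
  E : Type
  le : E → E → Prop
  le_refl : ∀ e, le e e
  le_trans : ∀ e₁ e₂ e₃, le e₁ e₂ → le e₂ e₃ → le e₁ e₃
  le_antisymm : ∀ e₁ e₂, le e₁ e₂ → le e₂ e₁ → e₁ = e₂
  finite_below : ∀ e, {e' | le e' e}.Finite
  conflict : E → E → Prop
  conflict_irrefl : ∀ e, ¬ conflict e e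
  conflict_symm : ∀ e₁ e₂, conflict e₁ e₂ → conflict e₂ e₁
  conflict_hereditary : ∀ e₁ e₂ e₃, conflict e₁ e₂ → le e₂ e₃ → conflict e₁ e₃

/-- A configuration: a finite, downward-closed, conflict-free set of events. -/
def EventStructure.IsConfig (ES : EventStructure) (c : Set ES.E) : Prop :=
  c.Finite ∧ (∀ e ∈ c, ∀ e', ES.le e' e → e' ∈ c) ∧
    ∀ e ∈ c, ∀ e' ∈ c, ¬ ES.conflict e e'

/-- The interval `I(u,v)` in a graph. -/
def gInterval {V : Type} (G : SimpleGraph V) (u v : V) : Set V :=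
  {w | G.dist u w + G.dist w v = G.dist u v}

/-- A median graph: a connected graph in which every triple of vertices has a
unique median. -/
def IsMedianGraph {V : Type} (G : SimpleGraph V) : Prop :=
  G.Connected ∧ ∀ x y z : V, ∃! m : V,
    m ∈ gInterval G x y ∧ m ∈ gInterval G y z ∧ m ∈ gInterval G z x

/-- An orientation of the edges of a graph: each edge gets exactly one direction. -/
structure GraphOrientation {V : Type} (G : SimpleGraph V) where
  dir : V → V → Prop
  adj_of_dir : ∀ u v, dir u v → G.Adj u v
  total : ∀ u v, G.Adj u v → dir u v ∨ dir v u
  asymm : ∀ u v, dir u v → ¬ dir v u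

/-- An orientation is admissible (defines a directed median graph) if opposite
edges of every 4-cycle receive the same direction. -/
def IsAdmissible {V : Type} (G : SimpleGraph V) (o : GraphOrientation G) : Prop :=
  ∀ a b c d : V, G.Adj a b → G.Adj b c → G.Adj c d → G.Adj d a → a ≠ c → b ≠ d →
    (o.dir a b ↔ o.dir d c)

/-- The principal filter `F_o(v,G) = {x : v = x or v ≺_o x}` of a vertex `v`,
where `≺_o` is the partial order generated by the directed edges. -/
def oFilter {V : Type} {G : SimpleGraph V} (o : GraphOrientation G) (v : V) : Set V :=
  {x | Relation.ReflTransGen o.dir v x}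

/-!
In a median graph, an admissible orientation makes every directed path a geodesic and directs every
geodesic between the ends of a directed path, so on the filter of `v` the order `⪯_o` is the
betweenness order `x ∈ I(v, y)`. A parallel-transport argument along squares shows that filters are
convex. Applied to the orientation away from a vertex `b`, this says that the cones
`{x | a ∈ I(b, x)}` are convex as well.

Medians and convexity then give binary meets, upper bounds of pairwise bounded triples, and the
primality of the join-irreducible elements of the filter; finiteness of intervals gives finite
principal ideals. Any poset with these properties is the domain of configurations of the event
structure of its join-irreducible elements, where conflict means having no common upper bound.
-/

open Relation

/-- Complete join-irreducibility: the elements strictly below `j` have a greatest member. In a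
poset with few joins this replaces `SupIrred`, which needs a `SemilatticeSup`. -/
def IsCompletelySupIrred {P : Type*} [Preorder P] (j : P) : Prop :=
  ∃ p, IsGreatest (Set.Iio j) p

/-- The order-theoretic properties that characterise the configuration domains of event
structures; the events are recovered as the completely join-irreducible elements. -/
structure IsEventDomain (P : Type*) [PartialOrder P] : Prop where
  nonempty : Nonempty P
  finite_Iic : ∀ x : P, (Set.Iic x).Finite
  exists_isGLB : ∀ a b : P, ∃ m, IsGLB {a, b} m
  bddAbove_triple : ∀ a b c : P, BddAbove {a, b} → BddAbove {b, c} → BddAbove {a, c} →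
    BddAbove {a, b, c}
  le_or_le_of_isLUB : ∀ j a b m : P, IsCompletelySupIrred j → IsLUB {a, b} m → j ≤ m →
    j ≤ a ∨ j ≤ b

lemma bddAbove_pair_iff {P : Type*} [Preorder P] {a b : P} :
    BddAbove {a, b} ↔ ∃ u, a ≤ u ∧ b ≤ u := by
  simp [BddAbove, Set.Nonempty, upperBounds]

lemma isLUB_pair_of_isLUB_insert {P : Type*} [Preorder P] {T : Set P} {a s x : P}
    (hs : IsLUB T s) (hx : IsLUB (insert a T) x) : IsLUB {a, s} x := by
  rwa [IsLUB, upperBounds_insert, upperBounds_singleton, ← hs.upperBounds_eq,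
    ← upperBounds_insert]

namespace IsEventDomain

variable {P : Type*} [PartialOrder P]

lemma exists_isLUB (hP : IsEventDomain P) {T : Set P} (hT : BddAbove T) : ∃ m, IsLUB T m := by
  obtain ⟨u, hu⟩ := hT
  obtain ⟨m, ⟨hmu, hTm⟩, hmin⟩ := ((hP.finite_Iic u).inter_of_left (upperBounds T)).exists_minimal
    ⟨u, le_rfl, hu⟩
  refine ⟨m, hTm, fun z hz => ?_⟩
  obtain ⟨g, hg⟩ := hP.exists_isGLB m z
  obtain ⟨hgm, hgz⟩ : g ≤ m ∧ g ≤ z := by simpa using hg.1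
  have hTg : g ∈ upperBounds T := fun t ht => hg.2 (by simp [hTm ht, hz ht])
  exact (hmin ⟨hgm.trans hmu, hTg⟩ hgm).trans hgz

-- A minimal `z ≤ x` with `¬ z ≤ y` is irreducible: everything strictly below it is `≤ z ⊓ y`.
lemma le_of_forall_irred_le (hP : IsEventDomain P) {x y : P}
    (h : ∀ j, IsCompletelySupIrred j → j ≤ x → j ≤ y) : x ≤ y := by
  by_contra hxy
  obtain ⟨z, ⟨hzx, hzy⟩, hmin⟩ := ((hP.finite_Iic x).inter_of_left {z | ¬ z ≤ y}).exists_minimal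
    ⟨x, le_rfl, hxy⟩
  have below : ∀ q < z, q ≤ y := fun q hqz => by
    by_contra hqy
    exact hqz.not_ge (hmin ⟨hqz.le.trans hzx, hqy⟩ hqz.le)
  obtain ⟨g, hg⟩ := hP.exists_isGLB z y
  obtain ⟨hgz, hgy⟩ : g ≤ z ∧ g ≤ y := by simpa using hg.1
  have hg_lt : g < z := hgz.lt_of_ne (by rintro rfl; exact hzy hgy)
  exact hzy (h z ⟨g, hg_lt, fun q hq => hg.2 (by simp [hq.le, below q hq])⟩ hzx)

lemma bddAbove_insert (hP : IsEventDomain P) {T : Set P} (hT : T.Finite) {a : P} (hbdd : BddAbove T)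
    (ha : ∀ t ∈ T, BddAbove {a, t}) : BddAbove (insert a T) := by
  induction T, hT using Set.Finite.induction_on with
  | empty => exact ⟨a, by simp⟩
  | @insert t T _ _ ih =>
    have hTbdd : BddAbove T := hbdd.mono (Set.subset_insert t T)
    obtain ⟨s, hs⟩ := hP.exists_isLUB hTbdd
    obtain ⟨w, haw, hTw⟩ := by
      simpa [BddAbove, Set.Nonempty] using ih hTbdd fun r hr => ha r (.inr hr)
    obtain ⟨z, htz, hTz⟩ := by simpa [BddAbove, Set.Nonempty] using hbdd
    obtain ⟨u, hu⟩ := hP.bddAbove_triple a t s (ha t (.inl rfl))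
      (bddAbove_pair_iff.2 ⟨z, htz, hs.2 hTz⟩) (bddAbove_pair_iff.2 ⟨w, haw, hs.2 hTw⟩)
    obtain ⟨hau, htu, hsu⟩ : a ≤ u ∧ t ≤ u ∧ s ≤ u := by simpa using hu
    exact ⟨u, by simpa [hau, htu] using upperBounds_mono_mem hsu hs.1⟩

lemma bddAbove_of_pairwise (hP : IsEventDomain P) {T : Set P} (hT : T.Finite)
    (h : ∀ s ∈ T, ∀ t ∈ T, BddAbove {s, t}) : BddAbove T := by
  induction T, hT using Set.Finite.induction_on with
  | empty => exact haveI := hP.nonempty; bddAbove_empty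
  | @insert a T _ hT ih =>
    exact hP.bddAbove_insert hT (ih fun s hs t ht => h s (.inr hs) t (.inr ht))
      fun t ht => h a (.inl rfl) t (.inr ht)

lemma exists_mem_le (hP : IsEventDomain P) {T : Set P} (hT : T.Finite) {j x : P}
    (hj : IsCompletelySupIrred j) (hx : IsLUB T x) (hjx : j ≤ x) : ∃ t ∈ T, j ≤ t := by
  induction T, hT using Set.Finite.induction_on generalizing x with
  | empty =>
    obtain ⟨p, hpj, -⟩ := hj
    exact absurd (isLUB_empty_iff.1 hx p) (hpj.trans_le hjx).not_ge
  | @insert a T _ _ ih =>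
    obtain ⟨s, hs⟩ := hP.exists_isLUB (hx.bddAbove.mono (Set.subset_insert a T))
    rcases hP.le_or_le_of_isLUB j a s x hj (isLUB_pair_of_isLUB_insert hs hx) hjx with hja | hjs
    · exact ⟨a, .inl rfl, hja⟩
    · obtain ⟨t, ht, hjt⟩ := ih hs hjs
      exact ⟨t, .inr ht, hjt⟩

section Representation

variable {P : Type} [PartialOrder P] (hP : IsEventDomain P)

/-- The events of a domain are its completely join-irreducible elements, ordered as in the domain;
two of them are in conflict when they have no common upper bound. -/
def eventStructure : EventStructure where
  E := {j : P // IsCompletelySupIrred j}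
  le a b := a ≤ b
  le_refl _ := le_rfl
  le_trans _ _ _ := le_trans
  le_antisymm _ _ := le_antisymm
  finite_below e := (hP.finite_Iic e.1).preimage Subtype.val_injective.injOn
  conflict a b := ¬ BddAbove {a.1, b.1}
  conflict_irrefl e h := h ⟨e, by simp⟩
  conflict_symm a b h := by rwa [Set.pair_comm]
  conflict_hereditary a b c h hbc hac := by
    obtain ⟨u, hau, hcu⟩ := bddAbove_pair_iff.1 hac
    exact h (bddAbove_pair_iff.2 ⟨u, hau, le_trans hbc hcu⟩)

/-- The configuration of an element `x`: all events below `x`. -/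
def eventsBelow (x : P) : Set hP.eventStructure.E :=
  {e | e.1 ≤ x}

lemma eventsBelow_isConfig (x : P) : hP.eventStructure.IsConfig (hP.eventsBelow x) :=
  ⟨(hP.finite_Iic x).preimage Subtype.val_injective.injOn, fun _ he _ he' => le_trans he' he,
    fun _ he _ he' hconf => hconf (bddAbove_pair_iff.2 ⟨x, he, he'⟩)⟩

lemma eventsBelow_subset_iff {x y : P} : hP.eventsBelow x ⊆ hP.eventsBelow y ↔ x ≤ y :=
  ⟨fun h => hP.le_of_forall_irred_le fun j hj hjx => h (a := ⟨j, hj⟩) hjx,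
    fun h _ he => le_trans he h⟩

lemma eventsBelow_injective : Function.Injective hP.eventsBelow := fun _ _ h =>
  le_antisymm (hP.eventsBelow_subset_iff.1 h.subset) (hP.eventsBelow_subset_iff.1 h.superset)

lemma exists_eventsBelow_eq {c : Set hP.eventStructure.E} (hc : hP.eventStructure.IsConfig c) :
    ∃ x, hP.eventsBelow x = c := by
  obtain ⟨hfin, hdown, hfree⟩ := hc
  have hbdd : BddAbove (Subtype.val '' c) := hP.bddAbove_of_pairwise (hfin.image _) <| by
    rintro _ ⟨e, he, rfl⟩ _ ⟨e', he', rfl⟩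
    exact not_not.1 (hfree e he e' he')
  obtain ⟨x, hx⟩ := hP.exists_isLUB hbdd
  refine ⟨x, Set.Subset.antisymm (fun e he => ?_) fun e he => hx.1 ⟨e, he, rfl⟩⟩
  obtain ⟨_, ⟨t, ht, rfl⟩, het⟩ := hP.exists_mem_le (hfin.image _) e.2 hx he
  exact hdown t ht e het

end Representation

end IsEventDomain

section Interval

variable {V : Type} {G : SimpleGraph V} {b u v w x y z : V}

/-- The edge `x y` leads away from the base vertex `b`. -/
def StepAway (G : SimpleGraph V) (b x y : V) : Prop :=
  G.Adj x y ∧ G.dist b y = G.dist b x + 1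

lemma mem_gInterval : w ∈ gInterval G u v ↔ G.dist u w + G.dist w v = G.dist u v :=
  Iff.rfl

lemma mem_gInterval_comm : w ∈ gInterval G u v ↔ w ∈ gInterval G v u := by
  rw [mem_gInterval, mem_gInterval, add_comm, G.dist_comm (u := w) (v := v),
    G.dist_comm (u := u) (v := w), G.dist_comm (u := u) (v := v)]

lemma right_mem_gInterval : v ∈ gInterval G u v := by
  simp [mem_gInterval]

lemma stepAway_iff : StepAway G b x y ↔ G.Adj x y ∧ x ∈ gInterval G b y := by
  refine and_congr_right fun hxy => ?_
  have := SimpleGraph.dist_eq_one_iff_adj.2 hxy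
  simp only [mem_gInterval]
  omega

lemma mem_gInterval_trans (hG : G.Connected) (hw : w ∈ gInterval G u x)
    (hz : z ∈ gInterval G u w) : z ∈ gInterval G u x ∧ w ∈ gInterval G z x := by
  have := hG.dist_triangle (u := z) (v := w) (w := x)
  have := hG.dist_triangle (u := u) (v := z) (w := x)
  simp only [mem_gInterval] at hw hz ⊢
  omega

lemma exists_stepAway (hG : G.Connected) (hux : u ≠ x) : ∃ w, StepAway G u w x := by
  obtain ⟨p, hp⟩ := hG.exists_walk_length_eq_dist x u
  cases p with
  | nil => exact absurd rfl hux
  | @cons _ w _ hxw q =>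
    rw [SimpleGraph.Walk.length_cons, G.dist_comm] at hp
    have hwu := SimpleGraph.dist_le q
    rw [G.dist_comm] at hwu
    have := hG.dist_triangle (u := u) (v := w) (w := x)
    have := SimpleGraph.dist_eq_one_iff_adj.2 hxw.symm
    exact ⟨w, hxw.symm, by omega⟩

lemma StepAway.of_mem_gInterval (hG : G.Connected) (hzx : StepAway G w z x)
    (hw : w ∈ gInterval G v x) : StepAway G v z x ∧ w ∈ gInterval G v z := by
  rw [stepAway_iff] at hzx ⊢
  have := mem_gInterval_trans hG (mem_gInterval_comm.1 hw) (mem_gInterval_comm.1 hzx.2)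
  exact ⟨⟨hzx.1, mem_gInterval_comm.1 this.1⟩, mem_gInterval_comm.1 this.2⟩

end Interval

namespace IsMedianGraph

variable {V : Type} {G : SimpleGraph V}

section Metric

variable {a a' b x y z : V}

lemma exists_median (hG : IsMedianGraph G) (x y z : V) :
    ∃ m, m ∈ gInterval G x y ∧ m ∈ gInterval G x z ∧ m ∈ gInterval G y z := by
  obtain ⟨m, ⟨hxy, hyz, hzx⟩, -⟩ := hG.2 x y z
  exact ⟨m, hxy, mem_gInterval_comm.1 hzx, hyz⟩

lemma median_unique (hG : IsMedianGraph G) {m m' : V}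
    (hm : m ∈ gInterval G x y ∧ m ∈ gInterval G x z ∧ m ∈ gInterval G y z)
    (hm' : m' ∈ gInterval G x y ∧ m' ∈ gInterval G x z ∧ m' ∈ gInterval G y z) : m = m' :=
  (hG.2 x y z).unique ⟨hm.1, hm.2.2, mem_gInterval_comm.1 hm.2.1⟩
    ⟨hm'.1, hm'.2.2, mem_gInterval_comm.1 hm'.2.1⟩

lemma stepAway_or_stepAway (hG : IsMedianGraph G) (b : V) (hxy : G.Adj x y) :
    StepAway G b x y ∨ StepAway G b y x := by
  obtain ⟨m, hbx, hby, hm⟩ := hG.exists_median b x y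
  have hdist := SimpleGraph.dist_eq_one_iff_adj.2 hxy
  have : G.dist x m = 0 ∨ G.dist m y = 0 := by
    simp only [mem_gInterval] at hm
    omega
  simp only [hG.1.dist_eq_zero_iff] at this
  rcases this with rfl | rfl
  · exact .inl (stepAway_iff.2 ⟨hxy, hby⟩)
  · exact .inr (stepAway_iff.2 ⟨hxy.symm, hbx⟩)

lemma dist_eq_two (hG : IsMedianGraph G) (hyz : y ≠ z) (hy : G.Adj x y) (hz : G.Adj x z) :
    G.dist y z = 2 := by
  have hxy := SimpleGraph.dist_eq_one_iff_adj.2 hy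
  have hxz := SimpleGraph.dist_eq_one_iff_adj.2 hz
  have hnadj : ¬ G.Adj y z := fun hadj => by
    rcases hG.stepAway_or_stepAway x hadj with h | h <;> linarith [h.2]
  have := hG.1.one_lt_dist_of_ne_of_not_adj hyz hnadj
  have := hG.1.dist_triangle (u := y) (v := x) (w := z)
  rw [G.dist_comm (u := y) (v := x)] at this
  omega

lemma mem_gInterval_of_adj (hG : IsMedianGraph G) (hyz : y ≠ z) (hy : G.Adj x y)
    (hz : G.Adj x z) : x ∈ gInterval G y z := by
  simp [mem_gInterval, hG.dist_eq_two hyz hy hz, SimpleGraph.dist_eq_one_iff_adj.2 hz,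
    SimpleGraph.dist_eq_one_iff_adj.2 hy.symm]

lemma exists_stepAway_stepAway (hG : IsMedianGraph G) (hxz : x ≠ z) (hx : StepAway G b x y)
    (hz : StepAway G b z y) : ∃ w, StepAway G b w x ∧ StepAway G b w z := by
  obtain ⟨m, hmx, hmz, hm⟩ := hG.exists_median b x z
  have hdist := hG.dist_eq_two hxz hx.1.symm hz.1.symm
  have := hx.2
  have := hz.2
  have hcomm := G.dist_comm (u := x) (v := m)
  simp only [mem_gInterval] at hmx hmz hm
  have hadjx : G.Adj m x := SimpleGraph.dist_eq_one_iff_adj.1 (by omega)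
  have hadjz : G.Adj m z := SimpleGraph.dist_eq_one_iff_adj.1 (by omega)
  exact ⟨m, stepAway_iff.2 ⟨hadjx, hmx⟩, stepAway_iff.2 ⟨hadjz, hmz⟩⟩

lemma eq_of_stepAway (hG : IsMedianGraph G) (hxy : x ≠ y) (hax : StepAway G b a x)
    (hay : StepAway G b a y) (hax' : StepAway G b a' x) (hay' : StepAway G b a' y) : a = a' :=
  hG.median_unique
    ⟨(stepAway_iff.1 hax).2, (stepAway_iff.1 hay).2, hG.mem_gInterval_of_adj hxy hax.1 hay.1⟩
    ⟨(stepAway_iff.1 hax').2, (stepAway_iff.1 hay').2, hG.mem_gInterval_of_adj hxy hax'.1 hay'.1⟩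

lemma mem_gInterval_or_exists_stepAway (hG : IsMedianGraph G) (x y p : V) :
    p ∈ gInterval G x y ∨ ∃ q, StepAway G x q p ∧ StepAway G y q p := by
  obtain ⟨m, hxy, hxp, hyp⟩ := hG.exists_median x y p
  rcases eq_or_ne m p with rfl | hmp
  · exact .inl hxy
  · obtain ⟨q, hq⟩ := exists_stepAway hG.1 hmp
    exact .inr ⟨q, (hq.of_mem_gInterval hG.1 hxp).1, (hq.of_mem_gInterval hG.1 hyp).1⟩

end Metric

section Orientation

variable {o : GraphOrientation G} {m p q r u v w x y z : V}

lemma stepAway_of_dir (hG : IsMedianGraph G) (hx : ∀ z, StepAway G v z x → o.dir z x)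
    (hxy : o.dir x y) : StepAway G v x y :=
  (hG.stepAway_or_stepAway v (o.adj_of_dir x y hxy)).resolve_right
    fun h => o.asymm x y hxy (hx y h)

lemma dir_and_reflTransGen_of_stepAway (hG : IsMedianGraph G) (ho : IsAdmissible G o)
    (hx : ReflTransGen o.dir v x) (hzx : StepAway G v z x) :
    o.dir z x ∧ ReflTransGen o.dir v z := by
  induction hx generalizing z with
  | refl => simp [StepAway] at hzx
  | @tail x y hx hxy ih =>
    have hstep := hG.stepAway_of_dir (fun z hz => (ih hz).1) hxy
    rcases eq_or_ne x z with rfl | hxz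
    · exact ⟨hxy, hx⟩
    obtain ⟨w, hwx, hwz⟩ := hG.exists_stepAway_stepAway hxz hstep hzx
    obtain ⟨hdir, hw⟩ := ih hwx
    have hwy : w ≠ y := by rintro rfl; have := hwx.2; have := hstep.2; omega
    have hwz_dir : o.dir w z :=
      (ho x y z w hstep.1 hzx.1.symm hwz.1.symm hwx.1 hxz hwy.symm).1 hxy
    exact ⟨(ho w x y z hwx.1 hstep.1 hzx.1.symm hwz.1.symm hwy hxz).1 hdir, hw.tail hwz_dir⟩

lemma mem_gInterval_of_reflTransGen (hG : IsMedianGraph G) (ho : IsAdmissible G o)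
    (huw : ReflTransGen o.dir u w) (hwx : ReflTransGen o.dir w x) : w ∈ gInterval G u x := by
  induction hwx with
  | refl => exact right_mem_gInterval
  | @tail x y hwx hxy ih =>
    have step {v : V} (h : ReflTransGen o.dir v x) : StepAway G v x y :=
      hG.stepAway_of_dir (fun z hz => (hG.dir_and_reflTransGen_of_stepAway ho h hz).1) hxy
    have := (step hwx).2
    have := (step (huw.trans hwx)).2
    simp only [mem_gInterval] at ih ⊢
    omega

lemma reflTransGen_of_mem_gInterval (hG : IsMedianGraph G) (ho : IsAdmissible G o)
    (hx : ReflTransGen o.dir v x) (hw : w ∈ gInterval G v x) :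
    ReflTransGen o.dir v w ∧ ReflTransGen o.dir w x := by
  induction hn : G.dist w x generalizing x with
  | zero =>
    obtain rfl := hG.1.dist_eq_zero_iff.1 hn
    exact ⟨hx, .refl⟩
  | succ n ih =>
    obtain ⟨z, hz⟩ := exists_stepAway hG.1 (u := w) (x := x) (by rintro rfl; simp at hn)
    obtain ⟨hvz, hwz⟩ := hz.of_mem_gInterval hG.1 hw
    obtain ⟨hdir, hreach⟩ := hG.dir_and_reflTransGen_of_stepAway ho hx hvz
    obtain ⟨hvw, hwz⟩ := ih hreach hwz (by have := hz.2; omega)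
    exact ⟨hvw, hwz.tail hdir⟩

lemma reflTransGen_antisymm (hG : IsMedianGraph G) (ho : IsAdmissible G o)
    (hxy : ReflTransGen o.dir x y) (hyx : ReflTransGen o.dir y x) : x = y := by
  have := hG.mem_gInterval_of_reflTransGen ho hxy hyx
  simp only [mem_gInterval, SimpleGraph.dist_self, Nat.add_eq_zero_iff] at this
  exact hG.1.dist_eq_zero_iff.1 this.1

-- When the edge `p q` leads away from `v`, it is directed because it is opposite, in a square, to
-- an edge that is directed by induction.
lemma reflTransGen_of_stepAway (hG : IsMedianGraph G) (ho : IsAdmissible G o)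
    (hp : ReflTransGen o.dir v p) (hr : ReflTransGen o.dir v r) (hqp : StepAway G r q p) :
    ReflTransGen o.dir v q := by
  induction hn : G.dist v p using Nat.strong_induction_on generalizing p q with
  | _ n ih =>
  rcases hG.stepAway_or_stepAway v hqp.1 with hvqp | hvpq
  · exact (hG.dir_and_reflTransGen_of_stepAway ho hp hvqp).2
  rcases hG.mem_gInterval_or_exists_stepAway v r p with hpr | ⟨p', hvp', hrp'⟩
  · have hpr := (hG.reflTransGen_of_mem_gInterval ho hr hpr).2
    have hq := mem_gInterval_comm.1 (stepAway_iff.1 hqp).2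
    exact hp.trans (hG.reflTransGen_of_mem_gInterval ho hpr hq).1
  have hne : p' ≠ q := by rintro rfl; have := hvp'.2; have := hvpq.2; omega
  obtain ⟨w, hrwp', hrwq⟩ := hG.exists_stepAway_stepAway hne hrp' hqp
  have hp' := (hG.dir_and_reflTransGen_of_stepAway ho hp hvp').2
  have hw := ih (G.dist v p') (by have := hvp'.2; omega) hp' hrwp' rfl
  have hvp'w : StepAway G v p' w := by
    refine (hG.stepAway_or_stepAway v hrwp'.1.symm).resolve_right fun h => ?_
    rcases hG.stepAway_or_stepAway v hrwq.1 with h' | h' <;>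
    · have := h.2; have := h'.2; have := hvp'.2; have := hvpq.2; omega
  have hdir := (hG.dir_and_reflTransGen_of_stepAway ho hw hvp'w).1
  have hwp : w ≠ p := by rintro rfl; have := hrwp'.2; have := hrp'.2; omega
  exact hp.tail ((ho p' w q p hrwp'.1.symm hrwq.1 hqp.1 hrp'.1.symm hne hwp).1 hdir)

lemma reflTransGen_convex (hG : IsMedianGraph G) (ho : IsAdmissible G o)
    (hp : ReflTransGen o.dir v p) (hr : ReflTransGen o.dir v r) (hm : m ∈ gInterval G p r) :
    ReflTransGen o.dir v m := by
  induction hn : G.dist m p generalizing p with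
  | zero => rwa [hG.1.dist_eq_zero_iff.1 hn]
  | succ n ih =>
    obtain ⟨q, hq⟩ := exists_stepAway hG.1 (u := m) (x := p) (by rintro rfl; simp at hn)
    obtain ⟨hrq, hmq⟩ := hq.of_mem_gInterval hG.1 (mem_gInterval_comm.1 hm)
    exact ih (hG.reflTransGen_of_stepAway ho hp hr hrq) (mem_gInterval_comm.1 hmq)
      (by have := hq.2; omega)

end Orientation

section Cone

variable {a b p r m v w x y z : V}

/-- The orientation of all edges away from the base vertex `b`. -/
def baseOrientation (hG : IsMedianGraph G) (b : V) : GraphOrientation G where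
  dir := StepAway G b
  adj_of_dir _ _ h := h.1
  total _ _ h := hG.stepAway_or_stepAway b h
  asymm _ _ h h' := by have := h.2; have := h'.2; omega

lemma stepAway_opposite (hG : IsMedianGraph G) {a b c d v : V} (hbc : G.Adj b c)
    (hcd : G.Adj c d) (hda : G.Adj d a) (hac : a ≠ c) (hbd : b ≠ d) (hab : StepAway G v a b) :
    StepAway G v d c := by
  refine (hG.stepAway_or_stepAway v hcd).resolve_left fun hvcd => hac ?_
  have hcb : StepAway G v c b := (hG.stepAway_or_stepAway v hbc).resolve_left fun h => by
    rcases hG.stepAway_or_stepAway v hda with h' | h' <;>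
    · have := h.2; have := h'.2; have := hab.2; have := hvcd.2; omega
  have had : StepAway G v a d := (hG.stepAway_or_stepAway v hda).resolve_left fun h => by
    have := h.2; have := hcb.2; have := hab.2; have := hvcd.2; omega
  exact hG.eq_of_stepAway hbd hab had hcb hvcd

lemma baseOrientation_isAdmissible (hG : IsMedianGraph G) (b : V) :
    IsAdmissible G (hG.baseOrientation b) := fun _ _ _ _ hxy hyz hzw hwx hxz hyw =>
  ⟨hG.stepAway_opposite hyz hzw hwx hxz hyw,
    hG.stepAway_opposite hyz.symm hxy.symm hwx.symm hyw.symm hxz.symm⟩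

lemma baseOrientation_reflTransGen_base (hG : IsMedianGraph G) (b x : V) :
    ReflTransGen (hG.baseOrientation b).dir b x := by
  induction hn : G.dist b x generalizing x with
  | zero => rw [hG.1.dist_eq_zero_iff.1 hn]
  | succ n ih =>
    obtain ⟨w, hw⟩ := exists_stepAway hG.1 (u := b) (x := x) (by rintro rfl; simp at hn)
    exact (ih w (by have := hw.2; omega)).tail hw

lemma baseOrientation_reflTransGen_iff (hG : IsMedianGraph G) :
    ReflTransGen (hG.baseOrientation b).dir x y ↔ x ∈ gInterval G b y :=
  ⟨hG.mem_gInterval_of_reflTransGen (hG.baseOrientation_isAdmissible b)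
      (hG.baseOrientation_reflTransGen_base b x),
    fun h => (hG.reflTransGen_of_mem_gInterval (hG.baseOrientation_isAdmissible b)
      (hG.baseOrientation_reflTransGen_base b y) h).2⟩

lemma cone_convex (hG : IsMedianGraph G) (hp : a ∈ gInterval G b p) (hr : a ∈ gInterval G b r)
    (hm : m ∈ gInterval G p r) : a ∈ gInterval G b m := by
  rw [← hG.baseOrientation_reflTransGen_iff] at hp hr ⊢
  exact hG.reflTransGen_convex (hG.baseOrientation_isAdmissible b) hp hr hm

lemma eq_of_adj_of_mem_cone (hG : IsMedianGraph G) (hxy : x ≠ y) (hm : y ∈ gInterval G x m)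
    (hmw : G.Adj m w) (hmz : G.Adj m z) (hw : x ∈ gInterval G y w) (hz : x ∈ gInterval G y z) :
    w = z := by
  by_contra hne
  have hm' := hG.cone_convex hw hz (hG.mem_gInterval_of_adj hne hmw hmz)
  have := hG.1.pos_dist_of_ne hxy
  have := G.dist_comm (u := x) (v := y)
  simp only [mem_gInterval] at hm hm'
  omega

lemma exists_mem_gInterval_adj (hG : IsMedianGraph G) (hyx : StepAway G v y x)
    (hw : w ∈ gInterval G v x) (hxw : StepAway G w x y) : ∃ m ∈ gInterval G v y, G.Adj m w := by
  obtain ⟨m, hvw, hvy, hwy⟩ := hG.exists_median v w y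
  have := hyx.2
  have := hxw.2
  have := G.dist_comm (u := w) (v := m)
  simp only [mem_gInterval] at hw hvw hwy
  exact ⟨m, hvy, SimpleGraph.dist_eq_one_iff_adj.1 (by rw [mem_gInterval] at hvy; omega)⟩

-- Let `y` be a neighbour of `x` in `I(v, x)`. A vertex of `I(v, x)` outside `I(v, y)` lies on the
-- `x`-side of the edge `y x` and is determined by its neighbour on the `y`-side.
lemma finite_gInterval (hG : IsMedianGraph G) (v x : V) : (gInterval G v x).Finite := by
  induction hn : G.dist v x generalizing x with
  | zero =>
    refine (Set.finite_singleton x).subset fun w hw => hG.1.dist_eq_zero_iff.1 ?_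
    rw [mem_gInterval] at hw
    omega
  | succ n ih =>
    obtain ⟨y, hyx⟩ := exists_stepAway hG.1 (u := v) (x := x) (by rintro rfl; simp at hn)
    have hfin := ih y (by have := hyx.2; omega)
    have hfiber : ∀ m ∈ gInterval G v y, {w | G.Adj m w ∧ x ∈ gInterval G y w}.Finite := by
      refine fun m hm => Set.Subsingleton.finite fun w hw z hz => ?_
      have hym := (mem_gInterval_trans hG.1 (stepAway_iff.1 hyx).2 hm).2
      exact hG.eq_of_adj_of_mem_cone hyx.1.ne' (mem_gInterval_comm.1 hym) hw.1 hz.1 hw.2 hz.2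
    refine (hfin.union (hfin.biUnion hfiber)).subset fun w hw => ?_
    rcases hG.stepAway_or_stepAway w hyx.1 with hwyx | hwxy
    · exact .inl (hwyx.of_mem_gInterval hG.1 hw).2
    · obtain ⟨m, hm, hmw⟩ := hG.exists_mem_gInterval_adj hyx hw hwxy
      exact .inr (Set.mem_biUnion hm ⟨hmw, mem_gInterval_comm.1 (stepAway_iff.1 hwxy).2⟩)

end Cone

section Filter

variable {o : GraphOrientation G} {v a b c x y z : V}

/-- The partial order `⪯_o` generated by the directed edges. It depends on the proofs `hG` and `ho`
of antisymmetry, so it is installed locally rather than declared as an instance. -/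
abbrev reachabilityOrder (hG : IsMedianGraph G) (ho : IsAdmissible G o) : PartialOrder V where
  le := ReflTransGen o.dir
  le_refl _ := .refl
  le_trans _ _ _ := .trans
  le_antisymm _ _ := hG.reflTransGen_antisymm ho

lemma exists_lowerBound_mem_gInterval (hG : IsMedianGraph G) (ho : IsAdmissible G o)
    (ha : ReflTransGen o.dir v a) (hb : ReflTransGen o.dir v b) :
    ∃ m ∈ gInterval G a b, ReflTransGen o.dir v m ∧
      ReflTransGen o.dir m a ∧ ReflTransGen o.dir m b := by
  obtain ⟨m, hva, hvb, hab⟩ := hG.exists_median v a b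
  obtain ⟨hvm, hma⟩ := hG.reflTransGen_of_mem_gInterval ho ha hva
  exact ⟨m, hab, hvm, hma, (hG.reflTransGen_of_mem_gInterval ho hb hvb).2⟩

lemma exists_upperBound_mem_gInterval (hG : IsMedianGraph G) (ho : IsAdmissible G o)
    (ha : ReflTransGen o.dir a z) (hb : ReflTransGen o.dir b z) :
    ∃ m ∈ gInterval G a b, ReflTransGen o.dir a m ∧ ReflTransGen o.dir b m := by
  obtain ⟨m, hab, haz, hbz⟩ := hG.exists_median a b z
  exact ⟨m, hab, (hG.reflTransGen_of_mem_gInterval ho ha haz).1,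
    (hG.reflTransGen_of_mem_gInterval ho hb hbz).1⟩

lemma exists_upperBound_triple (hG : IsMedianGraph G) (ho : IsAdmissible G o)
    (hax : ReflTransGen o.dir a x) (hbx : ReflTransGen o.dir b x) (hby : ReflTransGen o.dir b y)
    (hcy : ReflTransGen o.dir c y) (haz : ReflTransGen o.dir a z) (hcz : ReflTransGen o.dir c z) :
    ∃ u, ReflTransGen o.dir a u ∧ ReflTransGen o.dir b u ∧ ReflTransGen o.dir c u := by
  obtain ⟨u, hxy, hxz, hyz⟩ := hG.exists_median x y z
  exact ⟨u, hG.reflTransGen_convex ho hax haz hxz, hG.reflTransGen_convex ho hbx hby hxy,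
    hG.reflTransGen_convex ho hcy hcz hyz⟩

lemma mem_gInterval_of_isGreatest_Iio (hG : IsMedianGraph G) (ho : IsAdmissible G o)
    {j p a : oFilter o v} : letI := hG.reachabilityOrder ho
    IsGreatest (Set.Iio j) p → ¬ j ≤ a → (p : V) ∈ gInterval G j a := by
  let _ := hG.reachabilityOrder ho
  intro ⟨hpj, hp⟩ hja
  obtain ⟨g, hg, hvg, hgj, hga⟩ := hG.exists_lowerBound_mem_gInterval ho j.2 a.2
  have hg_lt : (⟨g, hvg⟩ : oFilter o v) < j := lt_of_le_of_ne hgj (by rintro rfl; exact hja hga)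
  have hpj_le : p ≤ j := le_of_lt hpj
  have hpg := hG.mem_gInterval_of_reflTransGen ho (hp hg_lt) hpj_le
  exact (mem_gInterval_trans hG.1 hg (mem_gInterval_comm.1 hpg)).1

-- If `j` lies below neither `a` nor `b`, then the cone `{x | p ∈ I(j, x)}` contains both of them,
-- hence also every vertex of `I(a, b)`, but it contains no vertex above `j`.
lemma le_or_le_of_mem_gInterval (hG : IsMedianGraph G) (ho : IsAdmissible G o)
    {j a b m : oFilter o v} (hm : (m : V) ∈ gInterval G a b) :
    letI := hG.reachabilityOrder ho
    IsCompletelySupIrred j → j ≤ m → j ≤ a ∨ j ≤ b := by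
  let _ := hG.reachabilityOrder ho
  intro ⟨p, hp⟩ hjm
  by_contra! hcon
  have hpm := hG.cone_convex (hG.mem_gInterval_of_isGreatest_Iio ho hp hcon.1)
    (hG.mem_gInterval_of_isGreatest_Iio ho hp hcon.2) hm
  have hpj : p ≤ j := le_of_lt hp.1
  have hjm := hG.mem_gInterval_of_reflTransGen ho hpj hjm
  have := hG.1.pos_dist_of_ne (Subtype.coe_injective.ne (ne_of_lt hp.1))
  have := G.dist_comm (u := (p : V)) (v := j)
  simp only [mem_gInterval] at hpm hjm
  omega

theorem isEventDomain_oFilter (hG : IsMedianGraph G) (ho : IsAdmissible G o) (v : V) :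
    letI := hG.reachabilityOrder ho
    IsEventDomain (oFilter o v) := by
  let _ := hG.reachabilityOrder ho
  refine ⟨⟨v, .refl⟩, fun x => ?finite, fun a b => ?meet, fun a b c hab hbc hac => ?triple,
    fun j a b z hj hz hjz => ?prime⟩
  case finite =>
    exact ((hG.finite_gInterval v x).preimage Subtype.val_injective.injOn).subset
      fun w hw => hG.mem_gInterval_of_reflTransGen ho w.2 hw
  case meet =>
    obtain ⟨m, hab, hvm, hma, hmb⟩ := hG.exists_lowerBound_mem_gInterval ho a.2 b.2
    refine ⟨⟨m, hvm⟩, by simpa using ⟨hma, hmb⟩, fun u hu => ?_⟩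
    obtain ⟨hua, hub⟩ : u ≤ a ∧ u ≤ b := by simpa using hu
    exact hG.reflTransGen_convex ho hua hub hab
  case triple =>
    obtain ⟨x, hax, hbx⟩ := bddAbove_pair_iff.1 hab
    obtain ⟨y, hby, hcy⟩ := bddAbove_pair_iff.1 hbc
    obtain ⟨z, haz, hcz⟩ := bddAbove_pair_iff.1 hac
    obtain ⟨u, hau, hbu, hcu⟩ := hG.exists_upperBound_triple ho hax hbx hby hcy haz hcz
    exact ⟨⟨u, a.2.trans hau⟩, by simpa using ⟨hau, hbu, hcu⟩⟩
  case prime =>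
    obtain ⟨haz, hbz⟩ : a ≤ z ∧ b ≤ z := by simpa using hz.1
    obtain ⟨m, hm, ham, hbm⟩ := hG.exists_upperBound_mem_gInterval ho haz hbz
    have hzm : z ≤ ⟨m, a.2.trans ham⟩ := hz.2 (by simpa using ⟨ham, hbm⟩)
    exact hG.le_or_le_of_mem_gInterval ho (m := ⟨m, a.2.trans ham⟩) hm hj (hjz.trans hzm)

end Filter

end IsMedianGraph

/-- For any vertex `v` of a directed median graph `(G,o)`, the poset
`(F_o(v,G), ⪯_o)` is order-isomorphic to the domain `(D(E), ⊆)` of some event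
structure `E`: there is a bijection `ψ` from `F_o(v,G)` onto the configurations of
`E` with `x ⪯_o y` iff `ψ x ⊆ ψ y`. -/
theorem oFilter_is_event_domain {V : Type} (G : SimpleGraph V) (hG : IsMedianGraph G)
    (o : GraphOrientation G) (ho : IsAdmissible G o) (v : V) :
    ∃ (ES : EventStructure) (ψ : V → Set ES.E),
      (∀ x ∈ oFilter o v, ES.IsConfig (ψ x)) ∧
      Set.InjOn ψ (oFilter o v) ∧
      (∀ c : Set ES.E, ES.IsConfig c → ∃ x ∈ oFilter o v, ψ x = c) ∧
      ∀ x ∈ oFilter o v, ∀ y ∈ oFilter o v,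
        (Relation.ReflTransGen o.dir x y ↔ ψ x ⊆ ψ y) := by
  let _ := hG.reachabilityOrder ho
  have hF : IsEventDomain (oFilter o v) := hG.isEventDomain_oFilter ho v
  refine ⟨hF.eventStructure, fun x => {e | ReflTransGen o.dir e.1 x},
    fun x hx => hF.eventsBelow_isConfig ⟨x, hx⟩, fun x hx y hy hxy => ?_, fun c hc => ?_,
    fun x hx y hy => (hF.eventsBelow_subset_iff (x := ⟨x, hx⟩) (y := ⟨y, hy⟩)).symm⟩
  · exact congrArg Subtype.val (hF.eventsBelow_injective (a₁ := ⟨x, hx⟩) (a₂ := ⟨y, hy⟩) hxy)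
  · obtain ⟨x, rfl⟩ := hF.exists_eventsBelow_eq hc
    exact ⟨x, x.2, rfl⟩
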